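/- Let N ≥ 2, α ∈ (0,N), R > 0, and let Ω and Ω_n (n ∈ ℕ) be Lebesgue-measurable subsets of the ball B_R(0) such that |Ω_n Δ Ω| → 0 as n → ∞. Then V_α(Ω_n) → V_α(Ω) as n → ∞; that is, the Riesz energy is continuous with respect to L¹ convergence of equibounded sets. Moreover one has the quantitative estimate |V_α(Ω_n) − V_α(Ω)| ≤ C₀ · |Ω_n Δ Ω| · ( |Ω|^{α/N} + |Ω_n|^{α/N} ), where C₀ = ∫_B |z|^{α−N} dz and B is the ball centered at the origin with Lebesgue measure 1. -/

import Mathlib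

open MeasureTheory Metric Filter

lemma riesz_integrableOn_ball (N : ℕ) (hN : 2 ≤ N) (α : ℝ) (hα : α ∈ Set.Ioo (0 : ℝ) N) (ρ : ℝ) :
    IntegrableOn (fun z : EuclideanSpace ℝ (Fin N) => ‖z‖ ^ (α - N))
      (ball (0 : EuclideanSpace ℝ (Fin N)) ρ) volume := by
  refine integrableOn_ball_of_norm_le_rpow (C := 1) (α := N - α) (by simp; omega) ?_ ?_ ?_
  · simpa using hα.1
  · refine Eventually.of_forall fun x => ?_
    rw [Real.norm_of_nonneg (by positivity), one_mul, neg_sub]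
  · exact (by fun_prop : Measurable fun z : EuclideanSpace ℝ (Fin N) => ‖z‖ ^ (α - N)).aestronglyMeasurable

open scoped Pointwise in
lemma riesz_ball_scale (N : ℕ) (hN : 2 ≤ N) (α : ℝ) (hα : α ∈ Set.Ioo (0 : ℝ) N)
    (r s : ℝ) (hs : 0 < s) :
    ∫ z in ball (0 : EuclideanSpace ℝ (Fin N)) (s * r), ‖z‖ ^ (α - N) =
      (∫ z in ball (0 : EuclideanSpace ℝ (Fin N)) r, ‖z‖ ^ (α - N)) * s ^ α := by
  have h := Measure.setIntegral_comp_smul_of_pos (volume : Measure (EuclideanSpace ℝ (Fin N)))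
    (fun z => ‖z‖ ^ (α - N)) (ball 0 r) hs
  have hb : s • ball (0 : EuclideanSpace ℝ (Fin N)) r = ball 0 (s * r) := by
    simp only [_root_.smul_ball hs.ne', Real.norm_eq_abs, abs_of_nonneg hs.le, smul_zero]
  rw [hb] at h
  simp only [norm_smul, Real.norm_eq_abs, abs_of_pos hs, finrank_euclideanSpace, Fintype.card_fin,
    smul_eq_mul] at h
  have h2 : ∀ z : EuclideanSpace ℝ (Fin N), (s * ‖z‖) ^ (α - N) = s ^ (α - N) * ‖z‖ ^ (α - N) :=
    fun z => Real.mul_rpow hs.le (norm_nonneg _)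
  simp only [h2, integral_const_mul] at h
  have hsN : (0 : ℝ) < s ^ N := by positivity
  rw [Real.rpow_sub hs, Real.rpow_natCast] at h
  field_simp at h
  linarith

lemma riesz_bathtub (N : ℕ) (hN : 2 ≤ N) (α : ℝ) (hα : α ∈ Set.Ioo (0 : ℝ) N)
    (r : ℝ) (hr : 0 < r)
    (hball : volume (ball (0 : EuclideanSpace ℝ (Fin N)) r) = 1)
    (A : Set (EuclideanSpace ℝ (Fin N))) (hA : MeasurableSet A) (hAf : volume A ≠ ⊤)
    (x : EuclideanSpace ℝ (Fin N)) :
    IntegrableOn (fun y => ‖x - y‖ ^ (α - N)) A ∧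
    ∫ y in A, ‖x - y‖ ^ (α - N) ≤
      (∫ z in ball (0 : EuclideanSpace ℝ (Fin N)) r, ‖z‖ ^ (α - N)) *
        (volume A).toReal ^ (α / N) := by
  rcases eq_or_ne (volume A) 0 with h0 | h0
  · have : volume.restrict A = 0 := Measure.restrict_eq_zero.2 h0
    have h3 : α / N ≠ 0 := by
      have := hα.1
      have : (0:ℝ) < N := by linarith [hα.2]
      positivity
    simp [IntegrableOn, this, h0, Real.zero_rpow h3]
  have hN0 : (0:ℝ) < N := by linarith [hα.1, hα.2]
  set m := (volume A).toReal with hm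
  have hmpos : 0 < m := ENNReal.toReal_pos h0 hAf
  set s := m ^ (1 / (N:ℝ)) with hs
  have hspos : 0 < s := by positivity
  have hsα : s ^ α = m ^ (α / N) := by
    rw [hs, ← Real.rpow_mul hmpos.le]; congr 1; ring
  have hsN : s ^ N = m := by
    rw [hs, ← Real.rpow_natCast, ← Real.rpow_mul hmpos.le]
    rw [one_div_mul_cancel hN0.ne', Real.rpow_one]
  set B := ball (0 : EuclideanSpace ℝ (Fin N)) (s * r) with hB
  have hBm : MeasurableSet B := measurableSet_ball
  have hvB : volume B = volume A := by
    rw [hB, Measure.addHaar_ball_mul_of_pos _ _ hspos, hball, finrank_euclideanSpace,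
      Fintype.card_fin, hsN, mul_one, hm, ENNReal.ofReal_toReal hAf]
  rw [← hsα, ← riesz_ball_scale N hN α hα r s hspos]
  have hkB := riesz_integrableOn_ball N hN α hα (s * r)
  set ρ := s * r with hρ
  have hρ0 : 0 < ρ := by positivity
  set c := ρ ^ (α - N) with hc
  have hc0 : 0 ≤ c := by positivity
  let k : EuclideanSpace ℝ (Fin N) → ℝ := fun z => ‖z‖ ^ (α - N)
  have hI1 : Integrable (fun y => B.indicator k (x - y)) :=
    ((integrable_indicator_iff hBm).2 hkB).comp_sub_left x
  have hI2 : Integrable (fun y => A.indicator (fun _ => c) y) :=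
    (integrable_indicator_iff hA).2 (integrableOn_const hAf)
  have hI3' : Integrable (B.indicator (fun _ => c)) :=
    (integrable_indicator_iff hBm).2 (integrableOn_const (hvB ▸ hAf))
  have hI3 : Integrable (fun y => B.indicator (fun _ => c) (x - y)) := hI3'.comp_sub_left x
  have hle : ∀ y, y ≠ x → A.indicator (fun y => k (x - y)) y ≤
      B.indicator k (x - y) + A.indicator (fun _ => c) y - B.indicator (fun _ => c) (x - y) := by
    intro y hy
    have hpos : 0 < ‖x - y‖ := norm_pos_iff.2 (sub_ne_zero.2 hy.symm)
    have hexp : α - N ≤ 0 := by linarith [hα.2]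
    by_cases h1 : x - y ∈ B
    · have h2 : c ≤ k (x - y) := by
        refine Real.rpow_le_rpow_of_nonpos hpos ?_ hexp
        rw [hB, mem_ball_zero_iff] at h1
        exact h1.le
      by_cases h3 : y ∈ A <;> simp [h1, h3] <;> linarith
    · have h2 : k (x - y) ≤ c := by
        refine Real.rpow_le_rpow_of_nonpos hρ0 ?_ hexp
        rw [hB, mem_ball_zero_iff] at h1
        exact not_lt.1 h1
      by_cases h3 : y ∈ A <;> simp [h1, h3] <;> linarith
  have : Nonempty (Fin N) := ⟨⟨0, by omega⟩⟩
  have hae : ∀ᵐ y : EuclideanSpace ℝ (Fin N), y ≠ x := by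
    simp [ae_iff]
  have hle' := hae.mono hle
  have hI4 := (hI1.add hI2).sub hI3
  have hmeas : Measurable fun y => k (x - y) := by
    show Measurable fun y => ‖x - y‖ ^ (α - N)
    fun_prop
  have hI0 : Integrable (A.indicator (fun y => k (x - y))) := by
    refine hI4.mono' ((hmeas.indicator hA).aestronglyMeasurable) ?_
    filter_upwards [hle'] with y hy
    rw [Real.norm_of_nonneg]
    · exact hy
    · exact Set.indicator_nonneg (fun y _ => by positivity) _
  refine ⟨(integrable_indicator_iff hA).1 hI0, ?_⟩
  have h5 := integral_mono_ae hI0 hI4 hle'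
  have e1 : ∫ y, B.indicator k (x - y) = ∫ z in B, k z := by
    rw [integral_sub_left_eq_self (B.indicator k) volume x, integral_indicator hBm]
  have e2 : ∫ y, A.indicator (fun _ => c) y = m * c := by
    rw [integral_indicator hA, setIntegral_const]; rfl
  have e3 : ∫ y, B.indicator (fun _ => c) (x - y) = m * c := by
    rw [integral_sub_left_eq_self (B.indicator (fun _ => c)) volume x, integral_indicator hBm,
      setIntegral_const, measureReal_def, hvB]; rfl
  have e4 := integral_sub (hI1.add hI2) hI3
  have e5 := integral_add hI1 hI2
  simp only [Pi.add_apply, Pi.sub_apply] at h5 e4 e5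
  rw [integral_indicator hA] at h5
  calc _ = ∫ y in A, k (x - y) := rfl
    _ ≤ _ := h5
    _ = ∫ z in B, k z := by
      change ∫ y, (B.indicator k (x - y) + A.indicator (fun _ => c) y - B.indicator (fun _ => c) (x - y)) = _
      rw [e4, e5, e1, e2, e3]; ring

lemma abs_setIntegral_sub_le {E : Type*} [MeasurableSpace E] (μ : Measure E) (g : E → ℝ)
    (M : ℝ) (hg : ∀ x, |g x| ≤ M) (hgm : AEStronglyMeasurable g μ) (A B : Set E)
    (hA : MeasurableSet A) (hB : MeasurableSet B)
    (hAf : μ A ≠ ⊤) (hBf : μ B ≠ ⊤) :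
    |(∫ x in A, g x ∂μ) - ∫ x in B, g x ∂μ| ≤ M * (μ (symmDiff A B)).toReal := by
  have key : ∀ S : Set E, μ S ≠ ⊤ → IntegrableOn g S μ := fun S hS =>
    Measure.integrableOn_of_bounded (M := M) hS hgm (Eventually.of_forall hg)
  have hDf : μ (symmDiff A B) ≠ ⊤ := by
    refine ne_top_of_le_ne_top (ENNReal.add_ne_top.2 ⟨hAf, hBf⟩)
      ((measure_mono ?_).trans (measure_union_le A B))
    exact symmDiff_le_sup
  have hD : MeasurableSet (symmDiff A B) := hA.symmDiff hB
  rw [← integral_indicator hA, ← integral_indicator hB,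
    ← integral_sub ((integrable_indicator_iff hA).2 (key A hAf))
      ((integrable_indicator_iff hB).2 (key B hBf))]
  rw [← Real.norm_eq_abs]
  calc _ ≤ ∫ x, (symmDiff A B).indicator (fun _ => M) x ∂μ := by
        refine norm_integral_le_of_norm_le
          ((integrable_indicator_iff hD).2 (integrableOn_const hDf)) (Eventually.of_forall fun x => ?_)
        have := hg x
        by_cases h1 : x ∈ A <;> by_cases h2 : x ∈ B <;>
          simp [h1, h2, Set.mem_symmDiff, this]
    _ = _ := by
        rw [integral_indicator hD, setIntegral_const, smul_eq_mul, measureReal_def, mul_comm]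

lemma riesz_main (N : ℕ) (hN : 2 ≤ N) (α : ℝ) (hα : α ∈ Set.Ioo (0 : ℝ) N)
    (r : ℝ) (hr : 0 < r)
    (hball : volume (ball (0 : EuclideanSpace ℝ (Fin N)) r) = 1)
    (A B : Set (EuclideanSpace ℝ (Fin N))) (hA : MeasurableSet A) (hAf : volume A ≠ ⊤)
    (hB : MeasurableSet B) (hBf : volume B ≠ ⊤) :
    |(∫ x in A, ∫ y in A, ‖x - y‖ ^ (α - N)) -
          ∫ x in B, ∫ y in B, ‖x - y‖ ^ (α - N)| ≤
        (∫ z in ball (0 : EuclideanSpace ℝ (Fin N)) r, ‖z‖ ^ (α - N)) *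
          (volume (symmDiff A B)).toReal *
          ((volume B).toReal ^ (α / N) + (volume A).toReal ^ (α / N)) := by
  have bA := riesz_bathtub N hN α hα r hr hball A hA hAf
  have bB := riesz_bathtub N hN α hα r hr hball B hB hBf
  have hm2 : Measurable (fun p : EuclideanSpace ℝ (Fin N) × EuclideanSpace ℝ (Fin N) =>
      ‖p.1 - p.2‖ ^ (α - N)) := by fun_prop
  have meas : ∀ S : Set (EuclideanSpace ℝ (Fin N)),
      StronglyMeasurable (fun x => ∫ y in S, ‖x - y‖ ^ (α - N)) := fun S =>
    hm2.stronglyMeasurable.integral_prod_right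
  have nn : ∀ S : Set (EuclideanSpace ℝ (Fin N)), ∀ x, 0 ≤ ∫ y in S, ‖x - y‖ ^ (α - N) :=
    fun S x => integral_nonneg fun y => by positivity
  have hswap : ∫ x in B, ∫ y in A, ‖x - y‖ ^ (α - N) = ∫ x in A, ∫ y in B, ‖x - y‖ ^ (α - N) := by
    rw [integral_integral_swap]
    · simp only [norm_sub_rev]
    · change Integrable (fun p : EuclideanSpace ℝ (Fin N) × EuclideanSpace ℝ (Fin N) =>
        ‖p.1 - p.2‖ ^ (α - N)) _
      rw [integrable_prod_iff hm2.aestronglyMeasurable]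
      refine ⟨Eventually.of_forall fun x => (bA x).1, ?_⟩
      have : ∀ x y : EuclideanSpace ℝ (Fin N), ‖‖x - y‖ ^ (α - N)‖ = ‖x - y‖ ^ (α - N) :=
        fun x y => Real.norm_of_nonneg (by positivity)
      simp only [this]
      refine Measure.integrableOn_of_bounded
        (M := (∫ z in ball (0 : EuclideanSpace ℝ (Fin N)) r, ‖z‖ ^ (α - N)) *
          (volume A).toReal ^ (α / N)) hBf (meas A).aestronglyMeasurable
        (Eventually.of_forall fun x => ?_)
      rw [Real.norm_of_nonneg (nn A x)]; exact (bA x).2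
  have h1 := abs_setIntegral_sub_le volume (fun x => ∫ y in A, ‖x - y‖ ^ (α - N)) _
    (fun x => by rw [abs_of_nonneg (nn A x)]; exact (bA x).2) (meas A).aestronglyMeasurable A B
    hA hB hAf hBf
  have h2 := abs_setIntegral_sub_le volume (fun x => ∫ y in B, ‖x - y‖ ^ (α - N)) _
    (fun x => by rw [abs_of_nonneg (nn B x)]; exact (bB x).2) (meas B).aestronglyMeasurable A B
    hA hB hAf hBf
  rw [hswap] at h1
  rw [abs_le] at *
  constructor <;> linarith [h1.1, h1.2, h2.1, h2.2]

/-- For `N ≥ 2`, `α ∈ (0,N)`, `R > 0` and measurable sets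
`Ω, Ω_n ⊆ B_R(0)` with `|Ω_n Δ Ω| → 0`, one has `V_α(Ω_n) → V_α(Ω)`; moreover the
quantitative estimate `|V_α(Ω_n) − V_α(Ω)| ≤ C₀ |Ω_n Δ Ω| (|Ω|^{α/N} + |Ω_n|^{α/N})`
holds, with `C₀ = ∫_B |z|^{α−N} dz`, `B` being the ball of unit measure at the origin. -/
theorem riesz_energy_L1_continuous (N : ℕ) (hN : 2 ≤ N) (α : ℝ)
    (hα : α ∈ Set.Ioo (0 : ℝ) N) (R : ℝ) (hR : 0 < R)
    (Ω : Set (EuclideanSpace ℝ (Fin N))) (Ωn : ℕ → Set (EuclideanSpace ℝ (Fin N)))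
    (hΩmeas : MeasurableSet Ω) (hΩnmeas : ∀ n, MeasurableSet (Ωn n))
    (hΩsub : Ω ⊆ ball (0 : EuclideanSpace ℝ (Fin N)) R)
    (hΩnsub : ∀ n, Ωn n ⊆ ball (0 : EuclideanSpace ℝ (Fin N)) R)
    (hconv : Tendsto (fun n => volume (symmDiff (Ωn n) Ω)) atTop (nhds 0))
    (r : ℝ) (hr : 0 < r)
    (hball : volume (ball (0 : EuclideanSpace ℝ (Fin N)) r) = 1) :
    Tendsto (fun n => ∫ x in Ωn n, ∫ y in Ωn n, ‖x - y‖ ^ (α - N)) atTop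
        (nhds (∫ x in Ω, ∫ y in Ω, ‖x - y‖ ^ (α - N))) ∧
    ∀ n : ℕ,
      |(∫ x in Ωn n, ∫ y in Ωn n, ‖x - y‖ ^ (α - N)) -
          ∫ x in Ω, ∫ y in Ω, ‖x - y‖ ^ (α - N)| ≤
        (∫ z in ball (0 : EuclideanSpace ℝ (Fin N)) r, ‖z‖ ^ (α - N)) *
          (volume (symmDiff (Ωn n) Ω)).toReal *
          ((volume Ω).toReal ^ (α / N) + (volume (Ωn n)).toReal ^ (α / N)) := by
  have fin : ∀ S : Set (EuclideanSpace ℝ (Fin N)), S ⊆ ball 0 R → volume S ≠ ⊤ := fun S hS =>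
    ne_top_of_le_ne_top measure_ball_lt_top.ne (measure_mono hS)
  have main := fun n => riesz_main N hN α hα r hr hball (Ωn n) Ω (hΩnmeas n) (fin _ (hΩnsub n))
    hΩmeas (fin _ hΩsub)
  refine ⟨?_, main⟩
  rw [tendsto_iff_norm_sub_tendsto_zero]
  have hexp : 0 ≤ α / N := div_nonneg hα.1.le (by positivity)
  have hC : 0 ≤ ∫ z in ball (0 : EuclideanSpace ℝ (Fin N)) r, ‖z‖ ^ (α - N) :=
    integral_nonneg fun y => by positivity
  have hlim : Tendsto (fun n => (∫ z in ball (0 : EuclideanSpace ℝ (Fin N)) r, ‖z‖ ^ (α - N)) *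
      (volume (symmDiff (Ωn n) Ω)).toReal * ((volume Ω).toReal ^ (α / N) +
        (volume (ball (0 : EuclideanSpace ℝ (Fin N)) R)).toReal ^ (α / N))) atTop (nhds 0) := by
    have h := (ENNReal.tendsto_toReal ENNReal.zero_ne_top).comp hconv
    have h' := (h.const_mul (∫ z in ball (0 : EuclideanSpace ℝ (Fin N)) r, ‖z‖ ^ (α - N))).mul_const
      ((volume Ω).toReal ^ (α / N) +
        (volume (ball (0 : EuclideanSpace ℝ (Fin N)) R)).toReal ^ (α / N))
    simpa using h'
  refine squeeze_zero (fun n => norm_nonneg _) (fun n => ?_) hlim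
  refine (main n).trans ?_
  have : (volume (Ωn n)).toReal ≤ (volume (ball (0 : EuclideanSpace ℝ (Fin N)) R)).toReal :=
    ENNReal.toReal_mono measure_ball_lt_top.ne (measure_mono (hΩnsub n))
  gcongr
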